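/- With ∇ torsion-free, the inverse of the formal exponential map satisfies: pbw^{-1}(X_0·X_1⋯X_n) ≡ X_0⊙⋯⊙X_n + Σ_{j<k} X_0⊙⋯⊙X̂_j⊙⋯⊙X̂_k⊙⋯⊙X_n ⊙ (∇_{X_j}X_k) modulo S^{≤ n−1}(L). -/

import Mathlib

/-! STATEMENT 7: with `∇` torsion-free,
`pbw⁻¹(X_0·X_1⋯X_n) ≡ X_0⊙⋯⊙X_n + Σ_{j<k} X_0⊙⋯X̂_j⋯X̂_k⋯⊙X_n ⊙ (∇_{X_j}X_k)`
modulo `S^{≤n−1}(L)`.  Since `pbw` is injective, this is expressed as: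
`X_0·X_1⋯X_n − pbw(X_0⊙⋯⊙X_n + Σ_{j<k} …) ∈ pbw(S^{≤n−1}(L))`. -/

noncomputable section

def EMap {L U : Type*} [Ring U] [Algebra ℚ U] (j : L → U) (nab : L → L → L) :
    (n : ℕ) → (Fin n → L) → U
  | 0, _ => 1
  | (n + 1), X =>
      (((n : ℚ) + 1)⁻¹) •
        ((∑ k : Fin (n + 1), j (X k) * EMap j nab n (X ∘ k.succAbove)) -
          ∑ k : Fin (n + 1), ∑ m : Fin n,
            EMap j nab n
              (Function.update (X ∘ k.succAbove) m (nab (X k) (X (k.succAbove m)))))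

inductive SymRel (A L : Type*) [CommRing A] [AddCommGroup L] [Module A L] :
    TensorAlgebra A L → TensorAlgebra A L → Prop
  | mk (x y : L) :
      SymRel A L (TensorAlgebra.ι A x * TensorAlgebra.ι A y)
        (TensorAlgebra.ι A y * TensorAlgebra.ι A x)

abbrev SymmAlgebra (A L : Type*) [CommRing A] [AddCommGroup L] [Module A L] :=
  RingQuot (SymRel A L)

def ιSym (A L : Type*) [CommRing A] [AddCommGroup L] [Module A L] :
    L →ₗ[A] SymmAlgebra A L :=
  (RingQuot.mkAlgHom A (SymRel A L)).toLinearMap.comp (TensorAlgebra.ι A)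

def symMonomial (A : Type*) {L : Type*} [CommRing A] [AddCommGroup L] [Module A L]
    (n : ℕ) (X : Fin n → L) : SymmAlgebra A L :=
  (List.ofFn fun i => ιSym A L (X i)).prod

/-- The filtration `S^{≤n}(L)` of `S_A(L)` by symmetric degree. -/
def Sfil (A L : Type*) [CommRing A] [AddCommGroup L] [Module A L] (n : ℕ) :
    Submodule A (SymmAlgebra A L) :=
  Submodule.span A
    {x | ∃ m ≤ n, ∃ X : Fin m → L, x = symMonomial A m X}

section Helpers

variable {A L : Type*} [CommRing A] [LieRing L] [Module A L]

theorem sym_mul_comm (a b : SymmAlgebra A L) : a * b = b * a := by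
  have ind : ∀ (P : SymmAlgebra A L → Prop), (∀ r, P (algebraMap A _ r)) → (∀ x, P (ιSym A L x)) →
      (∀ a b, P a → P b → P (a * b)) → (∀ a b, P a → P b → P (a + b)) → ∀ a, P a := by
    intro P h1 h2 h3 h4 a
    obtain ⟨a, rfl⟩ := RingQuot.mkAlgHom_surjective A (SymRel A L) a
    induction a using TensorAlgebra.induction with
    | algebraMap r => rw [AlgHom.commutes]; exact h1 r
    | ι x => exact h2 x
    | mul x y hx hy => rw [map_mul]; exact h3 _ _ hx hy
    | add x y hx hy => rw [map_add]; exact h4 _ _ hx hy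
  change Commute a b
  revert b
  apply ind
  · intro r; exact Algebra.commute_algebraMap_right _ _
  · intro x
    revert a
    apply ind
    · intro r; exact Algebra.commute_algebraMap_left _ _
    · intro y
      have := RingQuot.mkAlgHom_rel A (SymRel.mk (A := A) y x)
      rw [map_mul, map_mul] at this
      exact this
    · intro a b ha hb; exact ha.mul_left hb
    · intro a b ha hb; exact ha.add_left hb
  · intro a b ha hb; exact ha.mul_right hb
  · intro a b ha hb; exact ha.add_right hb

/-- The commutative ring structure; only used locally. -/
abbrev symCommRing : CommRing (SymmAlgebra A L) :=
  { (inferInstance : Ring (SymmAlgebra A L)) with mul_comm := sym_mul_comm }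

variable (A) in
def mon (l : List L) : SymmAlgebra A L := (l.map (ιSym A L)).prod

@[simp] theorem mon_nil : mon A ([] : List L) = 1 := rfl

@[simp] theorem mon_cons (x : L) (l : List L) : mon A (x :: l) = ιSym A L x * mon A l := by
  simp [mon]

theorem mon_ofFn (n : ℕ) (X : Fin n → L) : symMonomial A n X = mon A (List.ofFn X) := by
  simp [mon, symMonomial, List.map_ofFn, Function.comp_def]

variable (A) in
def nabL (nab : L → L → L) (x : L) : List L → SymmAlgebra A L
  | [] => 0
  | y :: t => ιSym A L (nab x y) * mon A t + ιSym A L y * nabL nab x t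

variable (A) in
def TL (nab : L → L → L) : List L → SymmAlgebra A L
  | [] => 0
  | x :: t => nabL A nab x t + ιSym A L x * TL nab t

theorem mon_perm {l l' : List L} (h : l.Perm l') : mon A l = mon A l' := by
  let _ : CommRing (SymmAlgebra A L) := symCommRing
  induction h with
  | nil => rfl
  | cons x _ ih => simp [ih]
  | swap x y t => simp only [mon_cons]; ring
  | trans _ _ h1 h2 => exact h1.trans h2

theorem nabL_perm (nab : L → L → L) (x : L) {l l' : List L} (h : l.Perm l') :
    nabL A nab x l = nabL A nab x l' := by
  let _ : CommRing (SymmAlgebra A L) := symCommRing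
  induction h with
  | nil => rfl
  | cons x h ih => simp only [nabL, ih, mon_perm h]
  | swap x y t => simp only [nabL, mon_cons]; ring
  | trans _ _ h1 h2 => exact h1.trans h2

theorem nabL_ofFn (nab : L → L → L) (x : L) (n : ℕ) (X : Fin n → L) :
    nabL A nab x (List.ofFn X) =
      ∑ m : Fin n, symMonomial A n (Function.update X m (nab x (X m))) := by
  induction n with
  | zero => simp [nabL]
  | succ n ih =>
    rw [List.ofFn_succ, nabL, Fin.sum_univ_succ, ih, Finset.mul_sum]
    congr 1
    · rw [mon_ofFn, List.ofFn_succ, mon_cons]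
      simp
    · refine Finset.sum_congr rfl fun m _ => ?_
      rw [mon_ofFn, mon_ofFn, List.ofFn_succ, mon_cons]
      congr 3
      funext i
      by_cases h : i = m
      · subst h; simp
      · simp [Function.update_of_ne h, Function.update_of_ne (fun e => h (Fin.succ_injective _ e))]

theorem nabL_erase (nab : L → L → L) (x : L) (n : ℕ) (X : Fin n → L) :
    nabL A nab x (List.ofFn X) =
      ∑ k : Fin n, ((List.ofFn fun i => ιSym A L (X i)).eraseIdx (k : ℕ)).prod *
        ιSym A L (nab x (X k)) := by
  induction n with
  | zero => simp [nabL]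
  | succ n ih =>
    rw [List.ofFn_succ, nabL, Fin.sum_univ_succ, ih, Finset.mul_sum]
    congr 1
    · rw [sym_mul_comm, ← mon_ofFn]
      simp [symMonomial, List.ofFn_succ]
    · refine Finset.sum_congr rfl fun m _ => ?_
      simp [List.ofFn_succ, mul_assoc]

theorem TL_erase (nab : L → L → L) (n : ℕ) (X : Fin n → L) :
    TL A nab (List.ofFn X) =
      ∑ k : Fin n, ∑ jj ∈ Finset.univ.filter (fun t : Fin n => t < k),
        (((List.ofFn fun i => ιSym A L (X i)).eraseIdx (k : ℕ)).eraseIdx (jj : ℕ)).prod *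
          ιSym A L (nab (X jj) (X k)) := by
  induction n with
  | zero => simp [TL]
  | succ n ih =>
    rw [List.ofFn_succ, TL, ih, nabL_erase]
    simp only [Finset.sum_filter]
    rw [Fin.sum_univ_succ]
    simp only [Fin.not_lt_zero, if_false, Finset.sum_const_zero, zero_add]
    rw [Finset.mul_sum, ← Finset.sum_add_distrib]
    refine Finset.sum_congr rfl fun k _ => ?_
    rw [Fin.sum_univ_succ, Finset.mul_sum]
    congr 1
    · simp [List.ofFn_succ]
    · refine Finset.sum_congr rfl fun m _ => ?_
      simp [List.ofFn_succ, mul_assoc]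

theorem ofFn_perm (n : ℕ) (Y : Fin (n + 1) → L) (i : Fin (n + 1)) :
    (List.ofFn Y).Perm (Y i :: List.ofFn (Y ∘ i.succAbove)) := by
  induction n with
  | zero =>
    have : i = 0 := by ext; simp
    subst this; simp
  | succ n ih =>
    induction i using Fin.cases with
    | zero => rw [List.ofFn_succ]; exact List.Perm.refl _
    | succ i =>
      rw [List.ofFn_succ, List.ofFn_succ (f := Y ∘ i.succ.succAbove)]
      refine ((ih (fun i => Y i.succ) i).cons _).trans ?_
      refine (List.Perm.swap _ _ _).trans ?_
      simp [Function.comp_def]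

variable (A L) in
def Gs (n : ℕ) : Submodule A (SymmAlgebra A L) :=
  Submodule.span A {x | ∃ l : List L, l.length < n ∧ x = mon A l}

theorem Gs_le (n : ℕ) : Gs A L (n + 1) ≤ Sfil A L n := by
  refine Submodule.span_le.2 ?_
  rintro _ ⟨l, hl, rfl⟩
  refine Submodule.subset_span ⟨l.length, by omega, l.get, ?_⟩
  rw [mon_ofFn, List.ofFn_get]

theorem mon_mem {n : ℕ} (l : List L) (h : l.length < n) : mon A l ∈ Gs A L n :=
  Submodule.subset_span ⟨l, h, rfl⟩

theorem Gs_mono {m n : ℕ} (h : m ≤ n) : Gs A L m ≤ Gs A L n := by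
  refine Submodule.span_le.2 ?_
  rintro _ ⟨l, hl, rfl⟩
  exact mon_mem l (by omega)

theorem mul_Gs {n : ℕ} (x : L) {s : SymmAlgebra A L} (h : s ∈ Gs A L n) :
    ιSym A L x * s ∈ Gs A L (n + 1) := by
  induction h using Submodule.span_induction with
  | mem s hs =>
    obtain ⟨l, hl, rfl⟩ := hs
    rw [← mon_cons]
    exact mon_mem _ (by simpa using hl)
  | zero => simp
  | add a b _ _ ha hb => rw [mul_add]; exact add_mem ha hb
  | smul c a _ ha => rw [mul_smul_comm]; exact Submodule.smul_mem _ _ ha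

theorem nabL_mem (nab : L → L → L) (x : L) (l : List L) :
    nabL A nab x l ∈ Gs A L (l.length + 1) := by
  induction l with
  | nil => simp [nabL]
  | cons y t ih =>
    refine add_mem ?_ (mul_Gs _ ih)
    rw [← mon_cons]
    exact mon_mem _ (by simp)

theorem TL_mem (nab : L → L → L) (l : List L) : TL A nab l ∈ Gs A L l.length := by
  induction l with
  | nil => simp [TL]
  | cons y t ih => exact add_mem (nabL_mem _ _ _) (mul_Gs _ ih)

variable {U : Type*} [Ring U] [Module A U]

def CL (j : L → U) (nab : L → L → L) (pbw : SymmAlgebra A L →ₗ[A] U) (x : L) (l : List L) : U :=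
  j x * pbw (mon A l) - pbw (nabL A nab x l) - pbw (ιSym A L x * mon A l)

theorem CL_perm (j : L → U) (nab : L → L → L) (pbw : SymmAlgebra A L →ₗ[A] U) (x : L)
    {l l' : List L} (h : l.Perm l') : CL j nab pbw x l = CL j nab pbw x l' := by
  rw [CL, CL, mon_perm h, nabL_perm nab x h]

/-- commuting `j x` with `pbw` up to lower order -/
theorem K_mem (ι : A →+* U) (j : L → U) (ρ : L → A → A) (nab : L → L → L)
    (hAU : ∀ (a : A) (u : U), a • u = ι a * u)
    (hcomm : ∀ (X : L) (a : A), j X * ι a = ι a * j X + ι (ρ X a))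
    (pbw : SymmAlgebra A L →ₗ[A] U) (k : ℕ)
    (IH : ∀ l : List L, l.length < k → ∀ x, CL j nab pbw x l ∈ (Gs A L l.length).map pbw)
    (x : L) {s : SymmAlgebra A L} (hs : s ∈ Gs A L k) :
    j x * pbw s - pbw (ιSym A L x * s) ∈ (Gs A L k).map pbw := by
  induction hs using Submodule.span_induction with
  | mem s hs =>
    obtain ⟨l, hl, rfl⟩ := hs
    have h1 := Submodule.map_mono (f := pbw) (Gs_mono hl.le) (IH l hl x)
    have h2 := Submodule.mem_map_of_mem (f := pbw)
      (Gs_mono (show l.length + 1 ≤ k from hl) (nabL_mem (A := A) nab x l))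
    have := add_mem h1 h2
    rw [CL] at this
    convert this using 1
    abel
  | zero => simp
  | add a b _ _ ha hb =>
    convert add_mem ha hb using 1
    simp only [mul_add, map_add]; abel
  | smul c a hh ha =>
    convert add_mem (Submodule.smul_mem _ c ha)
      (Submodule.smul_mem _ (ρ x c) (Submodule.mem_map_of_mem (f := pbw) hh)) using 1
    rw [mul_smul_comm, map_smul, map_smul, smul_sub]
    simp only [hAU]
    rw [← mul_assoc, hcomm, add_mul, mul_assoc]
    abel

theorem K_mem' (ι : A →+* U) (j : L → U) (ρ : L → A → A) (nab : L → L → L)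
    (hAU : ∀ (a : A) (u : U), a • u = ι a * u)
    (hcomm : ∀ (X : L) (a : A), j X * ι a = ι a * j X + ι (ρ X a))
    (pbw : SymmAlgebra A L →ₗ[A] U) (k : ℕ)
    (IH : ∀ l : List L, l.length < k → ∀ x, CL j nab pbw x l ∈ (Gs A L l.length).map pbw)
    (x : L) {u : U} (hu : u ∈ (Gs A L k).map pbw) :
    j x * u ∈ (Gs A L (k + 1)).map pbw := by
  obtain ⟨s, hs, rfl⟩ := hu
  have h1 := Submodule.map_mono (f := pbw) (Gs_mono k.le_succ)
    (K_mem ι j ρ nab hAU hcomm pbw k IH x hs)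
  have h2 := Submodule.mem_map_of_mem (f := pbw) (mul_Gs x hs)
  simpa using add_mem h1 h2

/-- the key swap congruence -/
theorem swap_mem (ι : A →+* U) (j : L → U) (ρ : L → A → A) (nab : L → L → L)
    (hAU : ∀ (a : A) (u : U), a • u = ι a * u)
    (hcomm : ∀ (X : L) (a : A), j X * ι a = ι a * j X + ι (ρ X a))
    (hbr : ∀ X Y : L, j X * j Y - j Y * j X = j ⁅X, Y⁆)
    (htf : ∀ X Y : L, nab X Y - nab Y X = ⁅X, Y⁆)
    (pbw : SymmAlgebra A L →ₗ[A] U) (t : List L)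
    (IH : ∀ l : List L, l.length < t.length + 1 → ∀ x,
      CL j nab pbw x l ∈ (Gs A L l.length).map pbw) (x y : L) :
    CL j nab pbw x (y :: t) - CL j nab pbw y (x :: t) ∈ (Gs A L (t.length + 1)).map pbw := by
  have IH' : ∀ l : List L, l.length < t.length → ∀ x,
      CL j nab pbw x l ∈ (Gs A L l.length).map pbw := fun l hl => IH l (by omega)
  have cx := K_mem' ι j ρ nab hAU hcomm pbw _ IH' y (IH t (by simp) x)
  have cy := K_mem' ι j ρ nab hAU hcomm pbw _ IH' x (IH t (by simp) y)
  have kx := K_mem ι j ρ nab hAU hcomm pbw _ IH y (nabL_mem (A := A) nab x t)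
  have ky := K_mem ι j ρ nab hAU hcomm pbw _ IH x (nabL_mem (A := A) nab y t)
  have kb := K_mem ι j ρ nab hAU hcomm pbw _ IH ⁅x, y⁆ (mon_mem (A := A) t (by simp))
  convert add_mem (sub_mem kb (sub_mem cy cx)) (sub_mem kx ky) using 1
  have e : ιSym A L x * (ιSym A L y * mon A t) = ιSym A L y * (ιSym A L x * mon A t) := by
    rw [← mul_assoc, sym_mul_comm (ιSym A L x), mul_assoc]
  simp only [CL, nabL, mon_cons, e]
  rw [← hbr, ← htf]
  simp only [map_sub, map_add, sub_mul, mul_sub, mul_assoc]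
  abel

theorem CL_mem [Algebra ℚ A] [Algebra ℚ U]
    (ι : A →+* U) (j : L → U) (ρ : L → A → A) (nab : L → L → L)
    (hAU : ∀ (a : A) (u : U), a • u = ι a * u)
    (hcomm : ∀ (X : L) (a : A), j X * ι a = ι a * j X + ι (ρ X a))
    (hbr : ∀ X Y : L, j X * j Y - j Y * j X = j ⁅X, Y⁆)
    (htf : ∀ X Y : L, nab X Y - nab Y X = ⁅X, Y⁆)
    (pbw : SymmAlgebra A L →ₗ[A] U)
    (hpbw : ∀ (n : ℕ) (X : Fin n → L), pbw (symMonomial A n X) = EMap j nab n X)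
    (l : List L) (x : L) : CL j nab pbw x l ∈ (Gs A L l.length).map pbw := by
  obtain ⟨n, hn⟩ : ∃ n, l.length = n := ⟨_, rfl⟩
  induction n using Nat.strong_induction_on generalizing l x with
  | _ n ih =>
  subst hn
  have IH : ∀ l' : List L, l'.length < l.length → ∀ x,
      CL j nab pbw x l' ∈ (Gs A L l'.length).map pbw := fun l' h x => ih _ h l' x rfl
  obtain ⟨n, hn⟩ : ∃ n, l.length = n := ⟨_, rfl⟩
  obtain ⟨Y, rfl⟩ : ∃ Y : Fin n → L, l = List.ofFn Y := by
    subst hn; exact ⟨l.get, (List.ofFn_get l).symm⟩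
  let X : Fin (n + 1) → L := Fin.cons x Y
  have hX0 : X 0 = x := rfl
  have hXs : ∀ i, X (Fin.succ i) = Y i := fun i => rfl
  -- the recursion
  have hrec : ∑ k : Fin (n + 1), CL j nab pbw (X k) (List.ofFn (X ∘ k.succAbove)) = 0 := by
    have h := hpbw (n + 1) X
    rw [EMap, eq_inv_smul_iff₀ (by positivity)] at h
    have hperm : ∀ k : Fin (n + 1), ιSym A L (X k) * mon A (List.ofFn (X ∘ k.succAbove)) =
        symMonomial A (n + 1) X := fun k => by
      rw [mon_ofFn, mon_perm (ofFn_perm n X k), mon_cons]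
    simp only [CL, hperm, Finset.sum_sub_distrib, nabL_ofFn, map_sum, hpbw]
    simp only [← mon_ofFn, hpbw] at h ⊢
    simp only [Function.comp_apply] at h ⊢
    rw [← h]
    simp only [Finset.sum_const, Finset.card_univ, Fintype.card_fin]
    rw [sub_eq_zero, ← Nat.cast_succ, Nat.cast_smul_eq_nsmul]
  have hdiff : ∀ k : Fin (n + 1), CL j nab pbw (X k) (List.ofFn (X ∘ k.succAbove)) -
      CL j nab pbw x (List.ofFn Y) ∈ (Gs A L (List.ofFn Y).length).map pbw := by
    intro k
    induction k using Fin.cases with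
    | zero =>
      have : X ∘ (Fin.succAbove 0) = Y := rfl
      rw [this, hX0, sub_self]
      exact zero_mem _
    | succ i =>
      obtain ⟨m, rfl⟩ : ∃ m, n = m + 1 := ⟨n - 1, by have := i.pos; omega⟩
      rw [hXs, CL_perm j nab pbw x (ofFn_perm m Y i)]
      have h2 : List.ofFn (X ∘ i.succ.succAbove) = x :: List.ofFn (Y ∘ i.succAbove) := by
        rw [List.ofFn_succ]
        simp [X, Function.comp_def]
      rw [h2]
      have hlen : (List.ofFn Y).length = (List.ofFn (Y ∘ i.succAbove)).length + 1 := by simp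
      rw [hlen] at IH ⊢
      exact swap_mem ι j ρ nab hAU hcomm hbr htf pbw _ IH _ _
  have hsum := sum_mem (fun k (_ : k ∈ Finset.univ) => hdiff k)
  rw [Finset.sum_sub_distrib, hrec, zero_sub, neg_mem_iff, Finset.sum_const, Finset.card_univ,
    Fintype.card_fin, ← Nat.cast_smul_eq_nsmul A] at hsum
  have := Submodule.smul_mem _ (algebraMap ℚ A ((n + 1 : ℕ) : ℚ)⁻¹) hsum
  rw [smul_smul, ← map_natCast (algebraMap ℚ A), ← map_mul,
    inv_mul_cancel₀ (by positivity), map_one, one_smul] at this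
  exact this

theorem main_list [Algebra ℚ A] [Algebra ℚ U]
    (ι : A →+* U) (j : L → U) (ρ : L → A → A) (nab : L → L → L)
    (hAU : ∀ (a : A) (u : U), a • u = ι a * u)
    (hcomm : ∀ (X : L) (a : A), j X * ι a = ι a * j X + ι (ρ X a))
    (hbr : ∀ X Y : L, j X * j Y - j Y * j X = j ⁅X, Y⁆)
    (htf : ∀ X Y : L, nab X Y - nab Y X = ⁅X, Y⁆)
    (pbw : SymmAlgebra A L →ₗ[A] U)
    (hpbw : ∀ (n : ℕ) (X : Fin n → L), pbw (symMonomial A n X) = EMap j nab n X)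
    (l : List L) :
    (l.map j).prod - pbw (mon A l + TL A nab l) ∈ (Gs A L (l.length - 1)).map pbw := by
  have hC := CL_mem ι j ρ nab hAU hcomm hbr htf pbw hpbw
  induction l with
  | nil =>
    have := hpbw 0 Fin.elim0
    rw [mon_ofFn, EMap] at this
    simp only [List.ofFn_zero] at this
    simp [TL, this, -mon_nil]
  | cons x t ih =>
    have h1 : j x * ((t.map j).prod - pbw (mon A t + TL A nab t)) ∈
        (Gs A L t.length).map pbw := by
      rcases t with _ | ⟨y, t⟩
      · have := hpbw 0 Fin.elim0
        rw [mon_ofFn, EMap] at this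
        simp only [List.ofFn_zero] at this
        simp [TL, this, -mon_nil]
      · exact K_mem' ι j ρ nab hAU hcomm pbw _ (fun l _ x => hC l x) x ih
    have h2 := hC t x
    have h3 := K_mem ι j ρ nab hAU hcomm pbw _ (fun l _ x => hC l x) x (TL_mem (A := A) nab t)
    have h4 := add_mem (add_mem h1 h2) h3
    simp only [List.length_cons, Nat.add_sub_cancel]
    convert h4 using 1
    simp only [CL, TL, List.map_cons, List.prod_cons, mon_cons, mul_sub, map_add, mul_add]
    abel

end Helpers

theorem pbw_inv_highest_order_terms
    {A L U : Type*} [CommRing A] [Algebra ℚ A]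
    [LieRing L] [Module A L] [Module.Projective A L]
    [Ring U] [Algebra ℚ U] [Module A U]
    (ι : A →+* U) (j : L → U) (ρ : L → A → A) (nab : L → L → L)
    (hAU : ∀ (a : A) (u : U), a • u = ι a * u)
    (hj_add : ∀ X Y : L, j (X + Y) = j X + j Y)
    (hj_smul : ∀ (a : A) (X : L), j (a • X) = ι a * j X)
    (hρ_der : ∀ (X : L) (a b : A), ρ X (a * b) = a * ρ X b + b * ρ X a)
    (hcomm : ∀ (X : L) (a : A), j X * ι a = ι a * j X + ι (ρ X a))
    (hbr : ∀ X Y : L, j X * j Y - j Y * j X = j ⁅X, Y⁆)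
    (hnab_smul₁ : ∀ (a : A) (X Y : L), nab (a • X) Y = a • nab X Y)
    (hnab_smul₂ : ∀ (a : A) (X Y : L), nab X (a • Y) = ρ X a • Y + a • nab X Y)
    (htf : ∀ X Y : L, nab X Y - nab Y X = ⁅X, Y⁆)
    (pbw : SymmAlgebra A L →ₗ[A] U)
    (hpbw : ∀ (n : ℕ) (X : Fin n → L), pbw (symMonomial A n X) = EMap j nab n X)
    -- `pbw` is a (filtered) isomorphism
    (hbij : Function.Bijective pbw)
    (n : ℕ) (X : Fin (n + 2) → L) :
    (List.ofFn fun i => j (X i)).prod -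
        pbw (symMonomial A (n + 2) X +
          ∑ k : Fin (n + 2), ∑ jj ∈ Finset.univ.filter (fun t : Fin (n + 2) => t < k),
            (((List.ofFn fun i => ιSym A L (X i)).eraseIdx (k : ℕ)).eraseIdx (jj : ℕ)).prod *
              ιSym A L (nab (X jj) (X k)))
      ∈ Submodule.map pbw (Sfil A L n) := by
  have h := main_list ι j ρ nab hAU hcomm hbr htf pbw hpbw (List.ofFn X)
  rw [TL_erase, ← mon_ofFn, List.map_ofFn] at h
  refine Submodule.map_mono (Gs_le n) ?_
  simpa [Function.comp_def, -Submodule.mem_map] using h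

end
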